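/- The number of arithmetic frieze patterns of width n equals the Catalan number C_{n+1} = (1/(n+2))·binomial(2n+2, n+1). -/

import Mathlib

/-- A closed Y-frieze pattern of width `n`: a staggered array `b i j` (row `k`
consists of entries `b i (i+k+2)`) satisfying the Y-diamond rule, with zeroth
row and `(n+1)`-th row of `0`s, a row of `-1`s below, nonzero intermediate
rows, and normalized to `0` outside the pattern. -/
structure ClosedYFrieze (n : ℕ) where
  b : ℤ → ℤ → ℚ
  diamond : ∀ i j : ℤ, 3 ≤ j - i → j - i ≤ (n : ℤ) + 3 →
    b i j * b (i + 1) (j + 1) = (1 + b (i + 1) j) * (1 + b i (j + 1))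
  topZero : ∀ i : ℤ, b i (i + 2) = 0
  botZero : ∀ i : ℤ, b i (i + (n : ℤ) + 3) = 0
  negRow : ∀ i : ℤ, b i (i + (n : ℤ) + 4) = -1
  rowsNonzero : ∀ k : ℕ, 1 ≤ k → k ≤ n → ∃ i : ℤ, b i (i + (k : ℤ) + 2) ≠ 0
  outside : ∀ i j : ℤ, j - i ≤ 1 ∨ (n : ℤ) + 5 ≤ j - i → b i j = 0

/-- All entries of the nonzero rows are positive rationals. -/
def ClosedYFrieze.Positive {n : ℕ} (P : ClosedYFrieze n) : Prop :=
  ∀ (i : ℤ) (k : ℕ), 1 ≤ k → k ≤ n → 0 < P.b i (i + (k : ℤ) + 2)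

/-- All entries of the nonzero rows are positive integers. -/
def ClosedYFrieze.Arithmetic {n : ℕ} (P : ClosedYFrieze n) : Prop :=
  ∀ (i : ℤ) (k : ℕ), 1 ≤ k → k ≤ n → ∃ m : ℕ, 0 < m ∧ P.b i (i + (k : ℤ) + 2) = (m : ℚ)

/-- A closed (Coxeter) frieze pattern of width `n`: a staggered array `a i j`
(row `k` consists of entries `a i (i+k+1)`) satisfying the diamond rule
`a_{i,j} a_{i+1,j+1} = 1 + a_{i,j+1} a_{i+1,j}`, bounded above and below by
rows of `1`s, and normalized to `0` outside. -/
structure ClosedFrieze (n : ℕ) where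
  a : ℤ → ℤ → ℚ
  diamond : ∀ i j : ℤ, 2 ≤ j - i → j - i ≤ (n : ℤ) + 1 →
    a i j * a (i + 1) (j + 1) = 1 + a i (j + 1) * a (i + 1) j
  topOne : ∀ i : ℤ, a i (i + 1) = 1
  botOne : ∀ i : ℤ, a i (i + (n : ℤ) + 2) = 1
  outside : ∀ i j : ℤ, j - i ≤ 0 ∨ (n : ℤ) + 3 ≤ j - i → a i j = 0

/-- All entries of the interior rows are positive integers. -/
def ClosedFrieze.Arithmetic {n : ℕ} (A : ClosedFrieze n) : Prop :=
  ∀ (i : ℤ) (k : ℕ), 1 ≤ k → k ≤ n → ∃ m : ℕ, 0 < m ∧ A.a i (i + (k : ℤ) + 1) = (m : ℚ)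

namespace FriezeAux

def sq : BinaryTree Unit → ℕ → ℕ → List ℕ
  | .nil, _, _ => []
  | .node _ l r, a, b => sq l a (a + b) ++ (a + b) :: sq r (a + b) b

def D : List ℕ → Prop
  | u :: x :: v :: Q => x ∣ u + v ∧ D (x :: v :: Q)
  | _ => True

theorem sq_length (t : BinaryTree Unit) : ∀ a b, (sq t a b).length = t.numNodes := by
  induction t with
  | nil => intro a b; simp [sq, BinaryTree.numNodes]
  | node _ l r ihl ihr => intro a b; simp [sq, BinaryTree.numNodes, ihl, ihr]; omega

theorem sq_ge (t : BinaryTree Unit) : ∀ a b, ∀ x ∈ sq t a b, a + b ≤ x := by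
  induction t with
  | nil => intro a b; simp [sq]
  | node _ l r ihl ihr =>
    intro a b x hx
    simp only [sq, List.mem_append, List.mem_cons] at hx
    rcases hx with h | h | h
    · have := ihl _ _ _ h; omega
    · omega
    · have := ihr _ _ _ h; omega

theorem split_unique {m : ℕ} {X X' Y Y' : List ℕ} (hY : m ∉ Y) (hY' : m ∉ Y')
    (h : X ++ m :: Y = X' ++ m :: Y') : X = X' ∧ Y = Y' := by
  rw [List.append_eq_append_iff] at h
  rcases h with ⟨c, h1, h2⟩ | ⟨c, h1, h2⟩
  · cases c with
    | nil => simp_all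
    | cons d c => 
      simp only [List.cons_append, List.cons.injEq] at h2
      exact absurd (by rw [h2.2]; simp) hY
  · cases c with
    | nil => simp_all
    | cons d c => 
      simp only [List.cons_append, List.cons.injEq] at h2
      exact absurd (by rw [h2.2]; simp) hY'

theorem sq_inj (t : BinaryTree Unit) : ∀ t' a b, 0 < b → sq t a b = sq t' a b → t = t' := by
  induction t with
  | nil =>
    intro t' a b hb h
    cases t' with
    | nil => rfl
    | node _ l r => simp [sq] at h
  | node _ l r ihl ihr =>
    intro t' a b hb h
    cases t' with
    | nil => simp [sq] at h
    | node _ l' r' =>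
      simp only [sq] at h
      have := split_unique (fun h => by have := sq_ge _ _ _ _ h; omega)
        (fun h => by have := sq_ge _ _ _ _ h; omega) h
      rw [ihl _ _ _ (by omega) this.1, ihr _ _ _ hb this.2]

theorem sq_insert (t : BinaryTree Unit) : ∀ a b P u v Q,
    a :: (sq t a b ++ [b]) = P ++ u :: v :: Q →
    ∃ t', a :: (sq t' a b ++ [b]) = P ++ u :: (u + v) :: v :: Q := by
  induction t with
  | nil =>
    intro a b P u v Q h
    refine ⟨.node () .nil .nil, ?_⟩
    rcases P with _ | ⟨p, _ | ⟨p', P⟩⟩ <;> simp_all [sq]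
  | node _ l r ihl ihr =>
    intro a b P u v Q h
    have h' : (a :: sq l a (a+b)) ++ ((a+b) :: (sq r (a+b) b ++ [b])) = (P ++ [u]) ++ (v :: Q) := by
      simpa [sq] using h
    rw [List.append_eq_append_iff] at h'
    have key : ∀ c, a :: (sq l a (a+b) ++ [a+b]) = P ++ u :: v :: c → 
        c ++ (sq r (a+b) b ++ [b]) = Q → 
        ∃ t', a :: (sq t' a b ++ [b]) = P ++ u :: (u + v) :: v :: Q := by
      intro c hc hQ
      obtain ⟨t', ht'⟩ := ihl _ _ _ _ _ _ hc
      refine ⟨.node () t' r, ?_⟩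
      have : a :: (sq (.node () t' r) a b ++ [b]) = 
        (a :: (sq t' a (a+b) ++ [a+b])) ++ (sq r (a+b) b ++ [b]) := by simp [sq]
      rw [this, ht', ← hQ]; simp
    rcases h' with ⟨c, h1, h2⟩ | ⟨c, h1, h2⟩
    · rcases List.eq_nil_or_concat c with rfl | ⟨c, w, rfl⟩
      · simp only [List.nil_append, List.cons.injEq, List.append_nil] at h1 h2
        refine key [] ?_ (by simpa using h2.2)
        have := congrArg (· ++ [a+b]) h1
        simp at this
        rw [← h2.1]; simpa using this.symm
      · rw [List.concat_eq_append] at h1 h2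
        rw [← List.append_assoc] at h1
        have h3 := List.append_inj' h1 rfl
        obtain ⟨h3, h4⟩ := h3
        simp at h4
        subst h4
        obtain ⟨t', ht'⟩ := ihr (a+b) b c u v Q (by simpa using h2)
        refine ⟨.node () l t', ?_⟩
        have : a :: (sq (.node () l t') a b ++ [b]) = 
          (a :: (sq l a (a+b))) ++ ((a+b) :: (sq t' (a+b) b ++ [b])) := by simp [sq]
        rw [this, ht', h3]; simp
    · cases c with
      | nil =>
        simp only [List.nil_append, List.cons.injEq, List.append_nil] at h1 h2
        refine key [] ?_ (by simpa using h2.2.symm)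
        have := congrArg (· ++ [a+b]) h1
        simp at this
        rw [h2.1]; simpa using this
      | cons w c =>
        simp only [List.cons_append, List.cons.injEq] at h2
        refine key (c ++ [a+b]) ?_ (by simp [h2.2])
        have := congrArg (· ++ [a+b]) h1
        simp at this
        rw [h2.1]; simpa using this

theorem D_remove : ∀ (P : List ℕ) (u v : ℕ) (Q : List ℕ),
    D (P ++ u :: (u + v) :: v :: Q) → D (P ++ u :: v :: Q)
  | [], u, v, [], _ => by simp [D]
  | [], u, v, q :: Q, h => by
    simp only [List.nil_append, D] at h ⊢
    refine ⟨?_, h.2.2⟩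
    have := h.2.1
    rw [show u + v + q = v + (u + q) by ring] at this
    exact (Nat.dvd_add_right (dvd_refl v)).1 this
  | [p], u, v, Q, h => by
    have h2 := D_remove [] u v Q
    simp only [List.cons_append, List.nil_append, D] at h h2 ⊢
    refine ⟨?_, h2 h.2⟩
    have := h.1
    rw [show p + (u + v) = u + (p + v) by ring] at this
    exact (Nat.dvd_add_right (dvd_refl u)).1 this
  | [p, p'], u, v, Q, h => by
    have h2 := D_remove [p'] u v Q
    simp only [List.cons_append, List.nil_append, D] at h h2 ⊢
    exact ⟨h.1, h2 h.2⟩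
  | p :: p' :: p'' :: P, u, v, Q, h => by
    have h2 := D_remove (p' :: p'' :: P) u v Q
    simp only [List.cons_append, D] at h h2 ⊢
    exact ⟨h.1, h2 h.2⟩

/-- either there is a mediant, or the list grows -/
theorem grow : ∀ (Q : List ℕ) (u x : ℕ), u < x → (∀ y ∈ Q, 0 < y) → D (u :: x :: Q) →
    (∃ P u' v' Q', u :: x :: Q = P ++ u' :: (u' + v') :: v' :: Q') ∨
    x + Q.length ≤ (x :: Q).getLast (by simp)
  | [], u, x, _, _, _ => by right; simp
  | v :: Q, u, x, hux, hpos, hD => by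
    by_cases hm : x = u + v
    · left; exact ⟨[], u, v, Q, by simp [hm]⟩
    · simp only [D] at hD
      have hv : 0 < v := hpos v (by simp)
      obtain ⟨k, hk⟩ := hD.1
      have hxv : x < v := by
        have : 2 ≤ k := by
          by_contra hlt
          have : k = 0 ∨ k = 1 := by omega
          rcases this with rfl | rfl <;> omega
        nlinarith
      rcases grow Q x v hxv (fun y hy => hpos y (by simp [hy])) hD.2 with ⟨P, u', v', Q', h⟩ | h
      · left; exact ⟨u :: P, u', v', Q', by rw [h]; simp⟩
      · right
        rw [List.getLast_cons (by simp)]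
        simp only [List.length_cons]; omega

theorem sq_surj (n : ℕ) : ∀ L : List ℕ, L.length = n → (∀ x ∈ L, 0 < x) → D (0 :: (L ++ [1])) →
    ∃ t, sq t 0 1 = L := by
  induction n with
  | zero => intro L hL _ _; exact ⟨.nil, by simp at hL; simp [hL, sq]⟩
  | succ n ih =>
    intro L hL hpos hD
    have hmed : ∃ P u v Q, 0 :: (L ++ [1]) = P ++ u :: (u + v) :: v :: Q := by
      cases L with
      | nil => simp at hL
      | cons x L =>
        rcases grow (L ++ [1]) 0 x (hpos x (by simp)) (by
          intro y hy
          simp only [List.mem_append, List.mem_singleton] at hy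
          rcases hy with hy | hy
          · exact hpos y (by simp [hy])
          · omega) (by simpa using hD) with h | h
        · simpa using h
        · have := hpos x (by simp)
          simp at h
          omega
    obtain ⟨P, u, v, Q, h⟩ := hmed
    -- new list
    have hD' := D_remove P u v Q (h ▸ hD)
    have hL' : ∃ L', P ++ u :: v :: Q = 0 :: (L' ++ [1]) ∧ (∀ x ∈ L', x ∈ L) := by
      rcases List.eq_nil_or_concat Q with rfl | ⟨Q, w, rfl⟩
      · cases P with
        | nil => simp at h; exact ⟨[], by simp [← h.1]; have := congrArg List.getLast? h.2; simp at this; omega, by simp⟩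
        | cons p P =>
          have h2 : (0 :: L) ++ [1] = (p :: P ++ [u, u + v]) ++ [v] := by simpa using h
          have h3 := List.append_inj' h2 rfl
          simp at h3
          refine ⟨P ++ [u], by simp [← h3.1.1, ← h3.2], ?_⟩
          rw [h3.1.2]; simp; tauto
      · have h2 : (0 :: L) ++ [1] = (P ++ u :: (u + v) :: v :: Q) ++ [w] := by simpa using h
        have h3 := List.append_inj' h2 rfl
        obtain ⟨h3, h4⟩ := h3
        simp at h4
        cases P with
        | nil => 
          simp at h3
          refine ⟨v :: Q, by simp [← h3.1, ← h4], ?_⟩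
          rw [h3.2]; simp; tauto
        | cons p P =>
          simp at h3
          refine ⟨P ++ u :: v :: Q, by simp [← h3.1, ← h4], ?_⟩
          rw [h3.2]; simp; tauto
    obtain ⟨L', e, hsub⟩ := hL'
    have hlen : L'.length = n := by
      have e1 := congrArg List.length e
      have e2 := congrArg List.length h
      simp at e1 e2; omega
    obtain ⟨t, ht⟩ := ih L' hlen (fun x hx => hpos x (hsub x hx)) (e ▸ hD')
    obtain ⟨t', ht'⟩ := sq_insert t 0 1 P u v Q (by rw [ht, e])
    rw [← h] at ht'
    refine ⟨t', ?_⟩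
    simpa using ht'

theorem sq_head (t : BinaryTree Unit) : ∀ a b,
    (sq t a b ++ [b]).headI ≡ b [MOD a] := by
  induction t with
  | nil => intro a b; simp [sq]; rfl
  | node _ l r ihl ihr =>
    intro a b
    have : (sq (.node () l r) a b ++ [b]).headI = (sq l a (a+b) ++ [a + b]).headI := by
      simp only [sq]
      cases sq l a (a+b) <;> simp
    rw [this]
    refine (ihl a (a+b)).trans ?_
    simp [Nat.ModEq]

theorem sq_last (t : BinaryTree Unit) : ∀ a b,
    (a :: sq t a b).getLast (by simp) ≡ a [MOD b] := by
  induction t with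
  | nil => intro a b; simp [sq]; rfl
  | node _ l r ihl ihr =>
    intro a b
    have : (a :: sq (.node () l r) a b).getLast (by simp)
        = ((a+b) :: sq r (a+b) b).getLast (by simp) := by
      simp only [sq]
      rw [List.getLast_cons (by simp), List.getLast_append_of_ne_nil]
    rw [this]
    refine (ihr (a+b) b).trans ?_
    simp [Nat.ModEq]

theorem D_glue : ∀ (S T : List ℕ) (m : ℕ) (hS : S ≠ []) (_ : T ≠ []), D (S ++ [m]) → D (m :: T) →
    m ∣ S.getLast hS + T.headI → D (S ++ m :: T)
  | [s], t :: T, m, _, _, h1, h2, h3 => by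
    simpa [D] using And.intro h3 h2
  | [s, s'], t :: T, m, _, _, h1, h2, h3 => by
    have := D_glue [s'] (t :: T) m (by simp) (by simp) (by simp [D]) h2 (by simpa using h3)
    simp [D] at h1 this ⊢
    exact ⟨h1, this⟩
  | s :: s' :: s'' :: S, t :: T, m, _, _, h1, h2, h3 => by
    simp only [List.cons_append, D] at h1
    have := D_glue (s' :: s'' :: S) (t :: T) m (by simp) (by simp) h1.2 h2 (by simpa using h3)
    simp only [List.cons_append, D] at this ⊢
    exact ⟨h1.1, this⟩

theorem sq_D (t : BinaryTree Unit) : ∀ a b, D (a :: (sq t a b ++ [b])) := by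
  induction t with
  | nil => intro a b; simp [sq, D]
  | node _ l r ihl ihr =>
    intro a b
    have := D_glue (a :: sq l a (a+b)) (sq r (a+b) b ++ [b]) (a+b) (by simp) (by simp)
      (by simpa using ihl a (a+b)) (ihr (a+b) b) ?_
    · simpa [sq] using this
    · have h1 := sq_last l a (a+b)
      have h2 := sq_head r (a+b) b
      exact (Nat.modEq_zero_iff_dvd).1 ((h1.add h2).trans (by simp [Nat.ModEq]))

theorem D_iff : ∀ M : List ℕ, D M ↔ 
    ∀ j, j + 2 < M.length → M.getD (j+1) 0 ∣ M.getD j 0 + M.getD (j+2) 0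
  | [] => by simp [D]
  | [x] => by simp [D]
  | [x, y] => by simp [D]
  | u :: x :: v :: Q => by
    rw [D, D_iff (x :: v :: Q)]
    constructor
    · rintro ⟨h1, h2⟩ j hj
      cases j with
      | zero => simpa using h1
      | succ j => simpa using h2 j (by simpa using hj)
    · intro h
      refine ⟨by simpa using h 0 (by simp), fun j hj => by simpa using h (j+1) (by simpa using hj)⟩

end FriezeAux
namespace FriezeAux

section construct
variable (n : ℕ) (F : ℕ → ℤ)

def G : ℕ → ℤ
  | 0 => -1
  | 1 => 0
  | j + 2 => ((F j + F (j+2)) / F (j+1)) * G (j+1) - G j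

def ext (n : ℕ) (F : ℕ → ℤ) (z : ℤ) : ℤ :=
  ((z / ((n:ℤ)+3)).negOnePow : ℤ) * F (z % ((n:ℤ)+3)).toNat

theorem ext_add (z : ℤ) : ext n F (z + ((n:ℤ)+3)) = - ext n F z := by
  unfold ext
  rw [Int.add_emod_right, Int.add_ediv_of_dvd_right (dvd_refl _), Int.ediv_self (by omega),
    Int.negOnePow_succ]
  simp

theorem ext_lt (j : ℕ) (h : j < n + 3) : ext n F j = F j := by
  unfold ext
  rw [Int.ediv_eq_zero_of_lt (by omega) (by omega), Int.emod_eq_of_lt (by omega) (by omega)]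
  simp

theorem ext_N : ext n F ((n:ℤ)+3) = - F 0 := by
  have := ext_add n F 0
  rw [zero_add] at this
  rw [this]
  have := ext_lt n F 0 (by omega)
  simp only [Nat.cast_zero] at this
  rw [this]

theorem per_ind (p : ℤ → Prop) (h1 : ∀ z, p z ↔ p (z + ((n:ℤ)+3)))
    (h2 : ∀ r : ℕ, r < n + 3 → p r) (z : ℤ) : p z := by
  have key : ∀ q r : ℤ, p r ↔ p (r + ((n:ℤ)+3) * q) := by
    intro q r
    induction q using Int.induction_on with
    | zero => simp
    | succ i ih => rw [ih, h1]; ring_nf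
    | pred i ih => rw [ih, h1 (r + ((n:ℤ)+3) * (-i - 1))]; ring_nf
  have h3 := Int.emod_add_mul_ediv z ((n:ℤ)+3)
  rw [← h3, ← key]
  have h4 := Int.emod_nonneg z (show (n:ℤ)+3 ≠ 0 by omega)
  have h5 := Int.emod_lt_of_pos z (show 0 < (n:ℤ)+3 by omega)
  obtain ⟨r, hr⟩ := Int.eq_ofNat_of_zero_le h4
  rw [hr]
  apply h2
  omega

theorem G_W (h0 : F 0 = 0) (h1 : F 1 = 1)
    (hpos : ∀ j, 1 ≤ j → j ≤ n + 2 → 0 < F j)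
    (hdvd : ∀ j, j + 1 ≤ n + 2 → F (j+1) ∣ F j + F (j+2)) :
    ∀ j, j ≤ n + 2 → F j * G F (j+1) - F (j+1) * G F j = 1 := by
  intro j
  induction j with
  | zero => intro _; simp [G, h0, h1]
  | succ j ih =>
    intro hj
    have h := ih (by omega)
    have h2 := Int.ediv_mul_cancel (hdvd j hj)
    simp only [G]
    generalize (F j + F (j+2)) / F (j+1) = c at *
    have : F (j+2) = c * F (j+1) - F j := by linarith
    show F (j+1) * _ - F (j+2) * _ = 1
    rw [this]
    linarith

theorem G_pos (hN : F (n+3) = 0) (h0 : F 0 = 0) 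
    (hpos : ∀ j, 1 ≤ j → j ≤ n + 2 → 0 < F j)
    (hW : ∀ j, j ≤ n + 2 → F j * G F (j+1) - F (j+1) * G F j = 1)
    (i : ℕ) : ∀ k, i + k + 1 ≤ n + 2 → 0 < F i * G F (i+k+1) - F (i+k+1) * G F i := by
  have hi : i ≤ n + 2 → 0 ≤ F i := by
    intro h
    rcases Nat.eq_zero_or_pos i with rfl | h'
    · rw [h0]
    · exact (hpos i h' h).le
  intro k
  induction k with
  | zero => intro h; rw [Nat.add_zero, hW i (by omega)]; norm_num
  | succ k ih =>
    intro h
    have a1 := ih (by omega)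
    have a2 := hi (by omega)
    have a3 := hpos (i+k+1) (by omega) (by omega)
    have a4 := hpos (i+k+1+1) (by omega) (by omega)
    have a5 := hW (i+k+1) (by omega)
    show 0 < F i * G F (i+k+1+1) - F (i+k+1+1) * G F i
    refine pos_of_mul_pos_right (a := F (i+k+1)) ?_ a3.le
    have : F (i+k+1) * (F i * G F (i+k+1+1) - F (i+k+1+1) * G F i)
      = F (i+k+1+1) * (F i * G F (i+k+1) - F (i+k+1) * G F i) + F i := by
      linear_combination (F i) * a5
    rw [this]
    have := mul_pos a4 a1
    omega

def V (n : ℕ) (F : ℕ → ℤ) (i j : ℤ) : ℤ := 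
  ext n F i * ext n (G F) j - ext n F j * ext n (G F) i

theorem exists_frieze (h0 : F 0 = 0) (h1 : F 1 = 1) (hl : F (n+2) = 1) (hN : F (n+3) = 0)
    (hpos : ∀ j, 1 ≤ j → j ≤ n + 2 → 0 < F j)
    (hdvd : ∀ j, j + 1 ≤ n + 2 → F (j+1) ∣ F j + F (j+2)) :
    ∃ A : ClosedFrieze n, A.Arithmetic ∧ ∀ j : ℕ, j ≤ n + 2 → A.a 0 j = (F j : ℚ) := by
  have hW := G_W n F h0 h1 hpos hdvd
  have hP := G_pos n F hN h0 hpos hW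
  have hGN : G F (n+3) = 1 := by
    have := hW (n+2) le_rfl
    rw [hl, show n + 2 + 1 = n + 3 by rfl, hN] at this
    linarith
  have eF : ∀ j : ℕ, j ≤ n + 3 → ext n F j = F j := by
    intro j hj
    rcases hj.lt_or_eq with h | rfl
    · exact ext_lt n F j h
    · push_cast; rw [ext_N, h0, hN]; rfl
  have eG : ∀ j : ℕ, j ≤ n + 3 → ext n (G F) j = G F j := by
    intro j hj
    rcases hj.lt_or_eq with h | rfl
    · exact ext_lt n _ j h
    · push_cast; rw [ext_N, hGN]; rfl
  have hV : ∀ i j : ℕ, i ≤ n+3 → j ≤ n + 3 → V n F i j = F i * G F j - F j * G F i := by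
    intro i j hi hj
    rw [V, eF i hi, eF j hj, eG i hi, eG j hj]
  have hVper : ∀ i j, V n F (i + ((n:ℤ)+3)) (j + ((n:ℤ)+3)) = V n F i j := by
    intro i j; simp only [V, ext_add]; ring
  have hVsw : ∀ i j, V n F i (j + ((n:ℤ)+3)) = V n F j i := by
    intro i j; simp only [V, ext_add]; ring
  have hV1 : ∀ i, V n F i (i+1) = 1 := by
    apply per_ind n
    · intro z
      rw [show z + ((n:ℤ)+3) + 1 = z + 1 + ((n:ℤ)+3) by ring, hVper]
    · intro r hr
      have := hV r (r+1) (by omega) (by omega)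
      push_cast at this
      rw [this, hW r (by omega)]
  have hVpos : ∀ i : ℤ, ∀ k : ℕ, 1 ≤ k → k ≤ n + 2 → 0 < V n F i (i + k) := by
    apply per_ind n
    · intro z
      have : ∀ k : ℕ, V n F (z + ((n:ℤ)+3)) (z + ((n:ℤ)+3) + k) = V n F z (z + k) := by
        intro k
        rw [show z + ((n:ℤ)+3) + k = z + k + ((n:ℤ)+3) by ring, hVper]
      simp only [this]
    · intro r hr k hk1 hk2
      rcases lt_trichotomy (r + k) (n + 3) with h | h | h
      · have := hV r (r+k) (by omega) (by omega)
        push_cast at this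
        rw [this]
        have := hP r (k-1) (by omega)
        rwa [show r + (k-1) + 1 = r + k by omega] at this
      · have := hV r (r+k) (by omega) (by omega)
        push_cast at this
        rw [this, h, hGN, hN]
        have := hpos r (by omega) (by omega)
        linarith
      · obtain ⟨s, hs⟩ := Nat.exists_eq_add_of_lt h
        have e : (r:ℤ) + k = ((s+1 : ℕ) : ℤ) + ((n:ℤ)+3) := by push_cast; omega
        rw [e, hVsw, hV _ _ (by omega) (by omega)]
        have := hP (s+1) (r - (s+1) - 1) (by omega)
        rwa [show s + 1 + (r - (s+1) - 1) + 1 = r by omega] at this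
  refine ⟨⟨fun i j => if 0 < j - i ∧ j - i < (n:ℤ) + 3 then (V n F i j : ℚ) else 0, ?_, ?_, ?_, ?_⟩, ?_, ?_⟩
  · intro i j h2 h3
    rw [if_pos (by omega), if_pos (by omega), if_pos (by omega), if_pos (by omega)]
    norm_cast
    have a1 := hV1 i
    have a2 := hV1 j
    have : V n F i j * V n F (i+1) (j+1) = V n F i (i+1) * V n F j (j+1) + 
      V n F i (j+1) * V n F (i+1) j := by simp only [V]; ring
    rw [this, a1, a2]; ring
  · intro i
    rw [if_pos (by omega), hV1]; norm_num
  · intro i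
    rw [if_pos (by omega)]
    have := hVsw i (i - 1)
    rw [show i - 1 + ((n:ℤ)+3) = i + n + 2 by ring] at this
    have h2 := hV1 (i-1)
    rw [sub_add_cancel] at h2
    rw [this, h2]; norm_num
  · intro i j h
    rw [if_neg (by omega)]
  · intro i k hk1 hk2
    have := hVpos i (k+1) (by omega) (by omega)
    refine ⟨(V n F i (i + (k+1:ℕ))).toNat, by omega, ?_⟩
    dsimp only
    rw [if_pos (by omega)]
    have h2 := Int.toNat_of_nonneg this.le
    push_cast at h2 ⊢
    rw [← add_assoc] at h2 ⊢
    exact_mod_cast h2.symm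
  · intro j hj
    dsimp only
    rcases Nat.eq_zero_or_pos j with rfl | h
    · simp [h0]
    · rw [if_pos (by omega)]
      have := hV 0 j (by omega) (by omega)
      simp only [Nat.cast_zero] at this
      rw [this, h0]; simp [G]

end construct

theorem frieze_entry {n : ℕ} {A : ClosedFrieze n} (hA : A.Arithmetic) (i j : ℤ) (h1 : 1 ≤ j - i)
    (h2 : j - i ≤ (n:ℤ) + 2) : ∃ m : ℕ, 0 < m ∧ A.a i j = m := by
  obtain ⟨k, hk⟩ := Int.eq_ofNat_of_zero_le (show 0 ≤ j - i - 1 by omega)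
  obtain rfl : j = i + k + 1 := by omega
  rcases Nat.eq_zero_or_pos k with rfl | hk0
  · exact ⟨1, by norm_num, by simpa using A.topOne i⟩
  · by_cases h : k = n + 1
    · refine ⟨1, by norm_num, ?_⟩
      have := A.botOne i
      rw [show i + k + 1 = i + (n:ℤ) + 2 by omega, this]; norm_num
    · exact hA i k hk0 (by omega)

theorem frieze_ne {n : ℕ} {A : ClosedFrieze n} (hA : A.Arithmetic) (i j : ℤ) (h1 : 1 ≤ j - i)
    (h2 : j - i ≤ (n:ℤ) + 2) : A.a i j ≠ 0 := by
  obtain ⟨m, hm, h⟩ := frieze_entry hA i j h1 h2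
  rw [h]; positivity

theorem frieze_row {n : ℕ} {A B : ClosedFrieze n} (i : ℤ)
    (h : ∀ k : ℕ, k ≤ n + 1 → A.a i (i + 1 + k) = B.a i (i + 1 + k)) (j : ℤ) :
    A.a i j = B.a i j := by
  by_cases h1 : 1 ≤ j - i ∧ j - i ≤ (n:ℤ) + 2
  · obtain ⟨k, hk⟩ := Int.eq_ofNat_of_zero_le (show 0 ≤ j - i - 1 by omega)
    obtain rfl : j = i + 1 + k := by omega
    exact h k (by omega)
  · rw [A.outside i j (by omega), B.outside i j (by omega)]

theorem frieze_up {n : ℕ} {A B : ClosedFrieze n} (hA : A.Arithmetic) (hB : B.Arithmetic) (i : ℤ)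
    (h : ∀ j, A.a i j = B.a i j) : ∀ j, A.a (i+1) j = B.a (i+1) j := by
  apply frieze_row
  intro k
  induction k with
  | zero => intro _; simp [A.topOne, B.topOne]
  | succ k ih =>
    intro hk
    have ih := ih (by omega)
    by_cases hk' : k = n
    · have e : i + 1 + 1 + ((k+1:ℕ):ℤ) = i + 1 + n + 2 := by push_cast; omega
      rw [e, A.botOne, B.botOne]
    · have a1 := A.diamond i (i + 1 + 1 + k) (by omega) (by omega)
      have a2 := B.diamond i (i + 1 + 1 + k) (by omega) (by omega)
      have a3 := frieze_ne hA i (i + 1 + 1 + k) (by omega) (by omega)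
      rw [ih, h, h, ← a2, ← h] at a1
      have := mul_left_cancel₀ a3 a1
      push_cast
      rwa [← add_assoc]

theorem frieze_down {n : ℕ} {A B : ClosedFrieze n} (hA : A.Arithmetic) (hB : B.Arithmetic) (i : ℤ)
    (h : ∀ j, A.a (i+1) j = B.a (i+1) j) : ∀ j, A.a i j = B.a i j := by
  have key : ∀ k : ℕ, k ≤ n + 1 → A.a i (i + n + 2 - k) = B.a i (i + n + 2 - k) := by
    intro k
    induction k with
    | zero => intro _; simp [A.botOne, B.botOne]
    | succ k ih =>
      intro hk
      have ih := ih (by omega)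
      by_cases hk' : k = n
      · have e : i + n + 2 - ((k+1:ℕ):ℤ) = i + 1 := by push_cast; omega
        rw [e, A.topOne, B.topOne]
      · have a1 := A.diamond i (i + n + 2 - ((k+1:ℕ):ℤ)) (by omega) (by omega)
        have a2 := B.diamond i (i + n + 2 - ((k+1:ℕ):ℤ)) (by omega) (by omega)
        have e : i + n + 2 - ((k+1:ℕ):ℤ) + 1 = i + n + 2 - k := by push_cast; ring
        rw [e] at a1 a2
        have a3 := frieze_ne hA (i+1) (i + n + 2 - k) (by omega) (by omega)
        rw [ih, h (i + n + 2 - ((k+1:ℕ):ℤ)), ← a2, ← h] at a1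
        exact mul_right_cancel₀ a3 a1
  apply frieze_row
  intro k hk
  have := key (n + 1 - k) (by omega)
  rwa [show i + n + 2 - ((n + 1 - k : ℕ):ℤ) = i + 1 + k by omega] at this

theorem frieze_eq {n : ℕ} {A B : ClosedFrieze n} (hA : A.Arithmetic) (hB : B.Arithmetic)
    (h : ∀ k : ℕ, k ≤ n → A.a 0 (k + 1) = B.a 0 (k + 1)) : A = B := by
  have h0 : ∀ j, A.a 0 j = B.a 0 j := by
    apply frieze_row
    intro k hk
    by_cases hk' : k = n + 1
    · have e : (0:ℤ) + 1 + k = 0 + n + 2 := by omega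
      rw [e, A.botOne, B.botOne]
    · have := h k (by omega)
      rwa [show (0:ℤ) + 1 + k = k + 1 by ring]
  have : A.a = B.a := by
    funext i
    induction i using Int.induction_on with
    | zero => funext j; exact h0 j
    | succ i ih => funext j; exact frieze_up hA hB _ (fun j => congrFun ih j) j
    | pred i ih => 
      funext j
      refine frieze_down hA hB _ (fun j => ?_) j
      rw [sub_add_cancel]; exact congrFun ih j
  cases A; cases B; cases this; rfl

theorem frieze_three {n : ℕ} {A : ClosedFrieze n} (hA : A.Arithmetic) (j : ℤ) (k : ℕ) :
    k ≤ n → A.a (j - 1 - k) (j - 1) + A.a (j - 1 - k) (j + 1) = 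
      A.a (j-1) (j+1) * A.a (j - 1 - k) j := by
  induction k with
  | zero =>
    intro _
    have h1 := A.topOne (j-1)
    rw [sub_add_cancel] at h1
    simp [h1, A.outside (j-1) (j-1) (by omega)]
  | succ k ih =>
    intro hk
    have ih := ih (by omega)
    have e : j - 1 - ((k+1 : ℕ) : ℤ) + 1 = j - 1 - k := by push_cast; ring
    set i := j - 1 - ((k+1 : ℕ) : ℤ) with hi
    rw [← e] at ih
    have a1 := A.diamond i j (by omega) (by omega)
    have a2 : A.a i (j-1) * A.a (i + 1) j = 1 + A.a i j * A.a (i + 1) (j-1) := by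
      by_cases hk0 : k = 0
      · have e1 : j - 1 = i + 1 := by omega
        have e2 : j = i + 1 + 1 := by omega
        rw [e1, e2, A.topOne, A.topOne, A.outside (i+1) (i+1) (by omega)]; ring
      · have := A.diamond i (j-1) (by omega) (by omega)
        rwa [sub_add_cancel] at this
    have a3 := frieze_ne hA (i+1) j (by omega) (by omega)
    apply mul_right_cancel₀ a3
    linear_combination a2 - a1 + A.a i j * ih

theorem getD_mid (L : List ℕ) (j : ℕ) (h : j < L.length) :
    (0 :: (L ++ [1])).getD (j+1) 0 = L[j] := by
  rw [List.getD_cons_succ, List.getD_append _ _ _ _ h, List.getD_eq_getElem _ _ h]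

def phi {n : ℕ} (A : ClosedFrieze n) : List ℕ :=
  (List.range (n+1)).map (fun j : ℕ => (A.a 0 ((j:ℤ)+1)).num.toNat)

theorem phi_getD {n : ℕ} {A : ClosedFrieze n} (hA : A.Arithmetic) (j : ℕ) (hj : j ≤ n + 2) :
    (((0 :: (phi A ++ [1])).getD j 0 : ℕ) : ℚ) = A.a 0 j := by
  rcases j with _ | j
  · simp [A.outside 0 0 (by omega)]
  · rcases (show j ≤ n + 1 by omega).lt_or_eq with h | rfl
    · obtain ⟨m, hm, e⟩ := frieze_entry hA 0 ((j:ℤ)+1) (by omega) (by omega)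
      rw [getD_mid _ _ (by simpa [phi] using h)]
      simp [phi, e]
    · have := A.botOne 0
      rw [zero_add] at this
      push_cast
      rw [show (n:ℤ) + 1 + 1 = n + 2 by ring, this]
      simp [phi, List.getD_append_right]

theorem phi_pos {n : ℕ} {A : ClosedFrieze n} (hA : A.Arithmetic) : ∀ x ∈ phi A, 0 < x := by
  intro x hx
  simp only [phi, List.mem_map, List.mem_range] at hx
  obtain ⟨j, hj, rfl⟩ := hx
  obtain ⟨m, hm, e⟩ := frieze_entry hA 0 ((j:ℤ)+1) (by omega) (by omega)
  simpa [e] using hm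

theorem phi_length {n : ℕ} (A : ClosedFrieze n) : (phi A).length = n + 1 := by simp [phi]

theorem phi_D {n : ℕ} {A : ClosedFrieze n} (hA : A.Arithmetic) : D (0 :: (phi A ++ [1])) := by
  rw [D_iff]
  intro j hj
  simp [phi_length] at hj
  have e0 := phi_getD hA j (by omega)
  have e1 := phi_getD hA (j+1) (by omega)
  have e2 := phi_getD hA (j+2) (by omega)
  have h3 := frieze_three hA ((j:ℤ)+1) j (by omega)
  obtain ⟨c, -, hc⟩ := frieze_entry hA (j:ℤ) ((j:ℤ)+1+1) (by omega) (by omega)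
  simp only [add_sub_cancel_right, sub_self] at h3
  rw [hc] at h3
  push_cast at e1 e2
  rw [show (j:ℤ)+2 = j + 1 + 1 by ring] at e2
  rw [← e0, ← e1, ← e2] at h3
  refine ⟨c, ?_⟩
  rw [mul_comm]
  exact_mod_cast h3

theorem phi_inj {n : ℕ} : Set.InjOn (phi (n := n)) {A | A.Arithmetic} := by
  intro A hA B hB h
  apply frieze_eq hA hB
  intro k hk
  have h1 := phi_getD hA (k+1) (by omega)
  have h2 := phi_getD hB (k+1) (by omega)
  rw [h] at h1
  have := h1.symm.trans h2
  exact_mod_cast this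

theorem phi_surj {n : ℕ} (t : BinaryTree Unit) (ht : t.numNodes = n + 1) :
    ∃ A : ClosedFrieze n, A.Arithmetic ∧ phi A = sq t 0 1 := by
  have hlen := sq_length t 0 1
  rw [ht] at hlen
  have hD := (D_iff _).1 (sq_D t 0 1)
  have hge := sq_ge t 0 1
  have hhead := sq_head t 0 1
  set L := sq t 0 1 with hL
  have hl : (0 :: (L ++ [1])).getD (n+2) 0 = 1 := by simp [List.getD_append_right, hlen]
  have hN : (0 :: (L ++ [1])).getD (n+3) 0 = 0 := by simp [hlen]
  obtain ⟨A, hA, h⟩ := exists_frieze n (fun j => ((0 :: (L ++ [1])).getD j 0 : ℕ)) (by simp) 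
    (by 
      have : (L ++ [1]).headI = 1 := by simpa [Nat.ModEq] using hhead
      generalize L = L' at this
      cases L' with
      | nil => simp
      | cons x L' => simpa using this)
    (by rw [hl]; rfl) (by rw [hN]; rfl)
    (by
      intro j h1 h2
      obtain ⟨j, rfl⟩ := Nat.exists_eq_add_of_le' h1
      rcases (show j ≤ n + 1 by omega).lt_or_eq with h | rfl
      · have := hge (L[j]'(by omega)) (by simp)
        rw [getD_mid _ _ (by omega)]
        omega
      · rw [hl]; norm_num) 
    (by
      intro j hj
      by_cases h : j = n + 1
      · subst h
        rw [hl]; simp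
      · have := hD j (by simp [hlen]; omega)
        exact_mod_cast this)
  refine ⟨A, hA, ?_⟩
  apply List.ext_getElem
  · rw [phi_length, hlen]
  · intro j h1 h2
    rw [phi_length] at h1
    have e := h (j+1) (by omega)
    rw [← phi_getD hA (j+1) (by omega)] at e
    have e' : (0 :: (phi A ++ [1])).getD (j+1) 0 = (0 :: (L ++ [1])).getD (j+1) 0 := by
      exact_mod_cast e
    rwa [getD_mid _ _ (by rw [phi_length]; omega), getD_mid _ _ h2] at e'

theorem image_eq (n : ℕ) : phi '' {A : ClosedFrieze n | A.Arithmetic} = 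
    (fun t => sq t 0 1) '' (BinaryTree.treesOfNumNodesEq (n+1) : Set (BinaryTree Unit)) := by
  ext L
  simp only [Set.mem_image, Set.mem_ofPred_eq, Finset.mem_coe, BinaryTree.mem_treesOfNumNodesEq]
  constructor
  · rintro ⟨A, hA, rfl⟩
    obtain ⟨t, ht⟩ := sq_surj (n+1) (phi A) (phi_length A) (phi_pos hA) (phi_D hA)
    refine ⟨t, ?_, ht⟩
    rw [← sq_length t 0 1, ht, phi_length]
  · rintro ⟨t, ht, rfl⟩
    exact phi_surj t ht

end FriezeAux

/-- The number of arithmetic frieze patterns of width `n` equals the Catalan number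
`C_{n+1} = (1/(n+2))·binom(2n+2, n+1)`. -/
theorem stmt15 (n : ℕ) (hn : 1 ≤ n) :
    {A : ClosedFrieze n | A.Arithmetic}.ncard = (2 * n + 2).choose (n + 1) / (n + 2) := by
  rw [← Set.ncard_image_of_injOn FriezeAux.phi_inj, FriezeAux.image_eq, Set.ncard_image_of_injective,
    Set.ncard_coe_finset, BinaryTree.treesOfNumNodesEq_card_eq_catalan,
    catalan_eq_centralBinom_div, Nat.centralBinom]
  · rfl
  · intro t t' h
    exact FriezeAux.sq_inj t t' 0 1 (by norm_num) h
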